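/- arXiv:1308.0788 — 5 statements merged into one kernel-verified Lean document; each statement's English description precedes it below -/
import Mathlib

section
/- Let R be a commutative ring, let m be a natural number, let y ∈ R, and let A, L : Finset (Fin m) → R be functions satisfying L(J) = ∑_{I ⊇ J} A(I) · y^{|I| − |J|} for every subset J of {1,…,m}. Then ∑_{J ⊆ {1,…,m}} (−1)^{|J|} A(J) = ∑_{I ⊆ {1,…,m}} (−1 − y)^{|I|} L(I). -/
/-- Theorem 3.1 (algebraic content): if `L J = ∑_{I ⊇ J} A I · y^{|I|-|J|}`
(the weight filtration relation between forms `Ω^y_{D_I}` and logarithmic forms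
`LΩ^y_J` on the strata of a SNC divisor), then
`∑_J (−1)^{|J|} A J = ∑_I (−1−y)^{|I|} L I`. -/
theorem snc_hirzebruch_class_log_expansion {R : Type*} [CommRing R] (m : ℕ) (y : R)
    (A L : Finset (Fin m) → R)
    (hL : ∀ J : Finset (Fin m),
      L J = ∑ I ∈ Finset.univ.filter (fun I : Finset (Fin m) => J ⊆ I),
        A I * y ^ (I.card - J.card)) :
    ∑ J : Finset (Fin m), (-1 : R) ^ J.card * A J
      = ∑ I : Finset (Fin m), (-1 - y) ^ I.card * L I := by
  -- After exchanging the sums, the coefficient of `A I` on the right is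
  -- `∑_{J ⊆ I} (-1 - y)^|J| y^(|I| - |J|) = (-1 - y + y)^|I|` by the binomial theorem.
  have swap : ∑ J : Finset (Fin m), (-1 - y) ^ J.card * L J
      = ∑ I : Finset (Fin m), ∑ J ∈ I.powerset,
          (-1 - y) ^ J.card * (A I * y ^ (I.card - J.card)) := by
    simp only [hL, Finset.mul_sum]
    exact Finset.sum_comm' (by simp)
  rw [swap]
  refine Finset.sum_congr rfl fun I _ => ?_
  have binom := Finset.sum_pow_mul_eq_add_pow (-1 - y) y I
  rw [sub_add_cancel] at binom
  rw [← binom, Finset.sum_mul]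
  exact Finset.sum_congr rfl fun J _ => by ring
end

section
/- Work in the field ℚ((h)) of formal Laurent series over ℚ. Let E = exp(−h) ∈ ℚ[[h]] be the power series ∑_{k≥0} (−1)^k h^k / k!, and set U = E − 1, a nonzero Laurent series of order 1, hence invertible in ℚ((h)). Then for every natural number n ≥ 1, the coefficient of h^{−1} in U^{−n} equals (−1)^n; equivalently, the coefficient of h^{−1} in (1 − exp(−h))^{−n} equals 1. -/
/-!
Write `U = h V` with `V` a power series with constant term `-1`, and let `W = V⁻¹`. Then
`U⁻ⁿ = h⁻ⁿ Wⁿ`, so the residue of `U⁻ⁿ` is the coefficient of `hⁿ⁻¹` in `Wⁿ`.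
The equation `U' = -(U + 1)` becomes `h W' = W + h W + W²`, hence
`h (Wⁿ)' = n (Wⁿ + h Wⁿ + Wⁿ⁺¹)`. Comparing coefficients of `hⁿ`, the terms `n [hⁿ] Wⁿ` cancel
(a derivative has no residue), leaving `[hⁿ] Wⁿ⁺¹ = -[hⁿ⁻¹] Wⁿ`; induction on `n` concludes.
-/

/-- The power series `(exp(-h) - 1) / h`. -/
noncomputable def expQuot : PowerSeries ℚ :=
  PowerSeries.mk fun k => (-1 : ℚ) ^ (k + 1) / (Nat.factorial (k + 1) : ℚ)

lemma constantCoeff_expQuot : PowerSeries.constantCoeff expQuot = -1 := by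
  simp [expQuot, ← PowerSeries.coeff_zero_eq_constantCoeff_apply]

lemma X_mul_expQuot :
    PowerSeries.X * expQuot
      = PowerSeries.mk (fun k => ((-1 : ℚ) ^ k / (Nat.factorial k : ℚ))) - 1 := by
  ext k
  cases k with
  | zero => simp
  | succ k => simp [PowerSeries.coeff_succ_X_mul, expQuot, PowerSeries.coeff_one]

/-- The differential equation `U' = -(U + 1)` for `U = h V`, expanded by the product rule. -/
lemma expQuot_ode :
    expQuot + PowerSeries.X * PowerSeries.derivative ℚ expQuot
      = -(PowerSeries.X * expQuot + 1) := by
  ext k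
  cases k with
  | zero => simp [constantCoeff_expQuot]
  | succ k =>
    have h1 : ((k + 1).factorial : ℚ) ≠ 0 := by positivity
    have h2 : (k : ℚ) + 1 + 1 ≠ 0 := by positivity
    simp only [map_add, map_neg, PowerSeries.coeff_succ_X_mul, PowerSeries.coeff_derivative,
      PowerSeries.coeff_one, expQuot, Nat.succ_ne_zero, if_false,
      PowerSeries.coeff_mk, Nat.factorial_succ (k + 1)]
    push_cast
    field_simp
    ring

lemma expQuot_mul_inv : expQuot * expQuot⁻¹ = 1 :=
  PowerSeries.mul_inv_cancel _ (by simp [constantCoeff_expQuot])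

lemma expQuot_inv_ode :
    PowerSeries.X * PowerSeries.derivative ℚ expQuot⁻¹
      = expQuot⁻¹ + PowerSeries.X * expQuot⁻¹ + expQuot⁻¹ ^ 2 := by
  rw [PowerSeries.derivative_inv']
  linear_combination (-expQuot⁻¹ ^ 2) * expQuot_ode
    + (expQuot⁻¹ + PowerSeries.X * expQuot⁻¹) * expQuot_mul_inv

lemma coeff_expQuot_inv_pow (n : ℕ) :
    PowerSeries.coeff n (expQuot⁻¹ ^ (n + 1)) = (-1 : ℚ) ^ (n + 1) := by
  induction n with
  | zero => simp [constantCoeff_expQuot]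
  | succ n ih =>
    have key : PowerSeries.X * PowerSeries.derivative ℚ (expQuot⁻¹ ^ (n + 1))
        = PowerSeries.C ((n : ℚ) + 1) * (expQuot⁻¹ ^ (n + 1)
          + PowerSeries.X * expQuot⁻¹ ^ (n + 1) + expQuot⁻¹ ^ (n + 2)) := by
      rw [PowerSeries.derivative_pow]
      simp only [Nat.add_sub_cancel, map_add, map_natCast, map_one]
      push_cast
      linear_combination ((n : PowerSeries ℚ) + 1) * expQuot⁻¹ ^ n * expQuot_inv_ode
    have h := congrArg (PowerSeries.coeff (n + 1)) key
    rw [PowerSeries.coeff_C_mul, map_add, map_add, PowerSeries.coeff_succ_X_mul,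
      PowerSeries.coeff_succ_X_mul, PowerSeries.coeff_derivative, ih] at h
    have hn : (n : ℚ) + 1 ≠ 0 := by positivity
    apply mul_left_cancel₀ hn
    linear_combination -h

/-- Residue computation encoding `∫_{ℙ^{n−1}} td(Tℙ^{n−1}) = 1`:
with `E = exp(−h) = ∑ (−1)^k h^k/k!` and `U = E − 1` in `ℚ((h))`, the
coefficient of `h^{−1}` in `U^{−n}` is `(−1)^n` for every `n ≥ 1`. -/
theorem residue_inv_pow_U (n : ℕ) (hn : 1 ≤ n) :
    letI E : LaurentSeries ℚ :=
      HahnSeries.ofPowerSeries ℤ ℚ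
        (PowerSeries.mk fun k => ((-1 : ℚ) ^ k / (Nat.factorial k : ℚ)))
    letI U : LaurentSeries ℚ := E - 1
    ((U ^ n)⁻¹).coeff (-1) = (-1 : ℚ) ^ n := by
  set U : LaurentSeries ℚ := HahnSeries.ofPowerSeries ℤ ℚ
    (PowerSeries.mk fun k => ((-1 : ℚ) ^ k / (Nat.factorial k : ℚ))) - 1
  obtain ⟨m, rfl⟩ : ∃ m, n = m + 1 := ⟨n - 1, by omega⟩
  have hU : U = HahnSeries.single (1 : ℤ) (1 : ℚ) * HahnSeries.ofPowerSeries ℤ ℚ expQuot := by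
    rw [← HahnSeries.ofPowerSeries_X, ← map_mul, X_mul_expQuot, map_sub, map_one]
  have hinv : (U ^ (m + 1))⁻¹ = HahnSeries.single (-((m : ℤ) + 1)) (1 : ℚ)
      * HahnSeries.ofPowerSeries ℤ ℚ (expQuot⁻¹ ^ (m + 1)) := by
    apply inv_eq_of_mul_eq_one_right
    rw [hU, mul_pow, HahnSeries.single_pow, ← map_pow, mul_mul_mul_comm,
      HahnSeries.single_mul_single, ← map_mul, ← mul_pow, expQuot_mul_inv]
    simp
  rw [hinv]
  have hidx : (-1 : ℤ) = (m : ℤ) + -((m : ℤ) + 1) := by ring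
  rw [hidx, HahnSeries.coeff_single_mul_add, one_mul, HahnSeries.ofPowerSeries_apply_coeff,
    coeff_expQuot_inv_pow]
end

section
/- Work in the field ℚ((h)) of formal Laurent series over ℚ. Let E = exp(−h) ∈ ℚ[[h]] be the power series ∑_{k≥0} (−1)^k h^k / k!, and set U = E − 1, a nonzero Laurent series of order 1, hence invertible in ℚ((h)). Then for all natural numbers n ≥ 1 and k ≥ 1, the coefficient of h^{−1} in (1 + U)^k · U^{−n} equals −binomial(k−1, n−1) (the negative of the binomial coefficient choosing n−1 from k−1). -/
/-!
Write `a(n, k)` for the residue of `E ^ k * U⁻ⁿ`, where `E = exp(-h)` and `U = E - 1`.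
Since `E ^ (k + 1) = E ^ k * (1 + U)`, one has `a(n + 1, k + 1) = a(n + 1, k) + a(n, k)`, which is
Pascal's rule, and `a(0, k) = 0` because `E ^ k` is a power series. It remains to compute
`a(n, 1)`. As `U' = -E`, the series `E * U⁻ⁿ` equals `-U' * U⁻ⁿ`, whose residue is `-1` for `n = 1`
and `0` for `n ≥ 2`, where it is the derivative of a multiple of `U ^ (1 - n)`.

The last step is carried out with power series only: `U = h * V` with `V` invertible,
`W = V⁻¹`, and the residue of `U' * U ^ (-(m + 1))` is the coefficient of `h ^ m` in
`(h * V)' * W ^ (m + 1)` (`coeff_derivative_X_mul_mul_pow`).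
-/

open PowerSeries in
/-- If `W` is inverse to `V`, the residue of `U' * U ^ (-(m + 1))` for `U = X * V` is
`1` if `m = 0` and `0` otherwise. -/
lemma coeff_derivative_X_mul_mul_pow (V W : PowerSeries ℚ) (hVW : V * W = 1) (m : ℕ) :
    coeff m (derivative ℚ (X * V) * W ^ (m + 1)) = if m = 0 then 1 else 0 := by
  have hU : derivative ℚ (X * V) * W ^ (m + 1)
      = W ^ m + X * (derivative ℚ V * W ^ (m + 1)) := by
    rw [Derivation.leibniz, derivative_X, smul_eq_mul, smul_eq_mul, pow_succ]
    linear_combination W ^ m * hVW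
  rw [hU]
  rcases m with _ | j
  · simp
  · have hW : derivative ℚ W = -(derivative ℚ V * W ^ 2) := by
      have h := congrArg (derivative ℚ) hVW
      rw [Derivation.leibniz, Derivation.map_one_eq_zero, smul_eq_mul, smul_eq_mul] at h
      linear_combination W * h - derivative ℚ W * hVW
    have hpow : derivative ℚ (W ^ (j + 1))
        = -((j + 1 : ℕ) • (derivative ℚ V * W ^ (j + 1 + 1))) := by
      rw [Derivation.leibniz_pow, hW]
      simp only [nsmul_eq_mul, smul_eq_mul, Nat.add_sub_cancel]
      ring
    -- Comparing coefficients of `h ^ j` gives the wanted identity multiplied by `j + 1`.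
    have hc := congrArg (coeff j) hpow
    rw [coeff_derivative, map_neg, map_nsmul, nsmul_eq_mul] at hc
    push_cast at hc
    rw [map_add, coeff_succ_X_mul, if_neg (Nat.succ_ne_zero j)]
    have hj : (j + 1 : ℚ) ≠ 0 := by positivity
    apply mul_left_cancel₀ hj
    linear_combination hc

/-- Residue lemma of §7: with `E = exp(−h)` and `U = E − 1` in `ℚ((h))`, for
`n, k ≥ 1` the coefficient of `h^{−1}` in `(1+U)^k · U^{−n}` equals
`−C(k−1, n−1)`. -/
theorem residue_one_add_U_pow (n k : ℕ) (hn : 1 ≤ n) (hk : 1 ≤ k) :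
    letI E : LaurentSeries ℚ :=
      HahnSeries.ofPowerSeries ℤ ℚ
        (PowerSeries.mk fun j => ((-1 : ℚ) ^ j / (Nat.factorial j : ℚ)))
    letI U : LaurentSeries ℚ := E - 1
    ((1 + U) ^ k * (U ^ n)⁻¹).coeff (-1)
      = -((Nat.choose (k - 1) (n - 1) : ℚ)) := by
  obtain ⟨n, rfl⟩ := Nat.exists_eq_add_of_le' hn
  obtain ⟨k, rfl⟩ := Nat.exists_eq_add_of_le' hk
  simp only [Nat.add_sub_cancel]
  set e : PowerSeries ℚ := PowerSeries.mk fun j => ((-1 : ℚ) ^ j / (Nat.factorial j : ℚ)) with he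
  obtain ⟨E, hE⟩ : ∃ E, E = HahnSeries.ofPowerSeries ℤ ℚ e := ⟨_, rfl⟩
  rw [← hE]
  obtain ⟨U, hU⟩ : ∃ U, U = E - 1 := ⟨_, rfl⟩
  rw [← hU]
  set V : PowerSeries ℚ :=
    PowerSeries.mk fun j => ((-1 : ℚ) ^ (j + 1) / (Nat.factorial (j + 1) : ℚ)) with hV
  have heV : e = 1 + PowerSeries.X * V := by
    ext j
    rcases j with _ | j
    · simp [he]
    · simp [he, hV, PowerSeries.coeff_succ_X_mul, PowerSeries.coeff_one]
  have hVW : V * V⁻¹ = 1 := PowerSeries.mul_inv_cancel V (by simp [hV])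
  have hder : e = -PowerSeries.derivative ℚ (PowerSeries.X * V) := by
    have h1 : PowerSeries.derivative ℚ (PowerSeries.X * V) = PowerSeries.derivative ℚ e := by
      rw [heV, map_add, Derivation.map_one_eq_zero, zero_add]
    rw [h1]
    ext j
    rw [map_neg, PowerSeries.coeff_derivative]
    simp only [he, PowerSeries.coeff_mk, Nat.factorial_succ]
    have hj : (j + 1 : ℚ) ≠ 0 := by positivity
    have hf : (j.factorial : ℚ) ≠ 0 := by positivity
    push_cast
    field_simp
    ring
  have hUV : U = HahnSeries.single 1 1 * HahnSeries.ofPowerSeries ℤ ℚ V := by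
    rw [hU, hE, heV, map_add, map_one, map_mul, HahnSeries.ofPowerSeries_X]
    ring
  have hs : (HahnSeries.single (1 : ℤ) (1 : ℚ)) * HahnSeries.single (-1) 1 = 1 := by
    rw [HahnSeries.single_mul_single]; simp
  have hinv : U * (HahnSeries.single (-1) 1 * HahnSeries.ofPowerSeries ℤ ℚ V⁻¹) = 1 := by
    have h := congrArg (HahnSeries.ofPowerSeries ℤ ℚ) hVW
    rw [map_mul, map_one] at h
    rw [hUV, mul_mul_mul_comm, hs, h, one_mul]
  have hU0 : U ≠ 0 := left_ne_zero_of_mul_eq_one hinv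
  have hUE : 1 + U = E := by rw [hU, add_sub_cancel]
  have hinv' := inv_eq_of_mul_eq_one_right hinv
  rw [hUE]
  have hbase : ∀ m : ℕ, (E * (U ^ (m + 1))⁻¹).coeff (-1) = if m = 0 then -1 else 0 := by
    intro m
    have h1 : E * (U ^ (m + 1))⁻¹ = HahnSeries.single (-((m : ℤ) + 1)) 1 *
        HahnSeries.ofPowerSeries ℤ ℚ (e * V⁻¹ ^ (m + 1)) := by
      rw [← inv_pow, hinv', mul_pow, HahnSeries.single_pow, map_mul (HahnSeries.ofPowerSeries ℤ ℚ),
        map_pow (HahnSeries.ofPowerSeries ℤ ℚ), hE]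
      simp only [one_pow, nsmul_eq_mul, mul_neg, mul_one, Nat.cast_add, Nat.cast_one]
      ring
    have h2 : (-1 : ℤ) = (m : ℤ) + -((m : ℤ) + 1) := by ring
    rw [h1, h2, HahnSeries.coeff_single_mul_add, one_mul, HahnSeries.ofPowerSeries_apply_coeff,
      hder, neg_mul, map_neg, coeff_derivative_X_mul_mul_pow V _ hVW]
    split_ifs <;> simp
  have hzero : ∀ k : ℕ, (E ^ k).coeff (-1) = 0 := by
    intro k
    rw [hE, ← map_pow, HahnSeries.ofPowerSeries_apply]
    apply HahnSeries.embDomain_of_notMem_range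
    rintro ⟨j, hj⟩
    simp at hj
  induction k generalizing n with
  | zero =>
    rw [zero_add, pow_one, hbase]
    rcases n with _ | n <;> simp
  | succ k ih =>
    have hrec : E ^ (k + 1 + 1) * (U ^ (n + 1))⁻¹
        = E ^ (k + 1) * (U ^ (n + 1))⁻¹ + E ^ (k + 1) * (U ^ n)⁻¹ := by
      rw [pow_succ E (k + 1)]
      nth_rewrite 2 [← hUE]
      field_simp
      ring
    rw [hrec, HahnSeries.coeff_add, ih n (by omega) (by omega)]
    rcases n with _ | n
    · rw [pow_zero, inv_one, mul_one, hzero]; simp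
    · rw [ih n (by omega) (by omega), Nat.choose_succ_succ]
      push_cast; ring
end

section
/- Let K = ℚ(S) be the field of rational functions over ℚ in one variable S, and work in the field K((h)) of formal Laurent series over K. Let E = exp(−h) ∈ K[[h]] be the power series ∑_{m≥0} (−1)^m h^m / m!, and set U = E − 1, a Laurent series of order 1, hence invertible in K((h)); also S − U is invertible in K((h)) since its constant coefficient S is nonzero in K. Then for all natural numbers k and n with 0 ≤ k < n, the coefficient of h^{−1} in (1 + U)^{k+1} · U^{−n} · (S − U)^{−1} equals −(1 + S)^k / S^n (an element of K, viewed as a constant Laurent series coefficient). -/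
/-!
Since `dU = -E dh`, the residue of `E * f(U) dh` is minus the `U^{-1}`-coefficient of `f`. Only two
instances of this change of variables are needed: `Res E / U = -1`, and `Res E / U ^ (n + 1) = 0`
for `n ≥ 1`, which holds because the argument is an exact derivative. Both are proved for power
series after writing `U = -h V` with `V` a unit (`coeff_mul_pow_eq_zero`).

Put `R k n = Res (1 + U) ^ (k + 1) * U ^ (-n) * (S - U)⁻¹`. Writing `S = (S - U) + U` gives
`S * R 0 (n + 1) = Res E / U ^ (n + 1) + R 0 n`, and `R 0 0 = 0`, so `R 0 n = -S ^ (-n)` for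
`n ≥ 1`. Expanding one factor `1 + U` gives `R (k + 1) (n + 1) = R k (n + 1) + R k n`, and the
formula follows by induction on `k`.
-/

/-- The power series `exp (-h)`. -/
noncomputable def expNegSeries (K : Type*) [Field K] : PowerSeries K :=
  PowerSeries.mk fun m => ((-1 : K) ^ m / (Nat.factorial m : K))

/-- The power series `V = (1 - exp (-h)) / h`. -/
noncomputable def todSeries (K : Type*) [Field K] : PowerSeries K :=
  PowerSeries.mk fun m => ((-1 : K) ^ m / (Nat.factorial (m + 1) : K))

section

variable {K : Type*} [Field K]

lemma expNegSeries_eq : expNegSeries K = 1 - PowerSeries.X * todSeries K := by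
  ext m
  cases m with
  | zero => simp [expNegSeries]
  | succ m =>
    simp [expNegSeries, todSeries, PowerSeries.coeff_succ_X_mul, PowerSeries.coeff_one, pow_succ,
      neg_div]

lemma constantCoeff_expNegSeries : PowerSeries.constantCoeff (expNegSeries K) = 1 := by
  rw [← PowerSeries.coeff_zero_eq_constantCoeff_apply, expNegSeries, PowerSeries.coeff_mk]
  simp

lemma constantCoeff_todSeries : PowerSeries.constantCoeff (todSeries K) = 1 := by
  rw [← PowerSeries.coeff_zero_eq_constantCoeff_apply, todSeries, PowerSeries.coeff_mk]
  simp

lemma todSeries_mul_inv : todSeries K * (todSeries K)⁻¹ = 1 := by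
  apply PowerSeries.mul_inv_cancel
  simp [constantCoeff_todSeries]

lemma derivative_expNegSeries [CharZero K] :
    PowerSeries.derivative K (expNegSeries K) = -expNegSeries K := by
  ext m
  have h1 : (m : K) + 1 ≠ 0 := by exact_mod_cast m.succ_ne_zero
  have h2 : (m.factorial : K) ≠ 0 := by exact_mod_cast m.factorial_ne_zero
  simp only [expNegSeries, PowerSeries.coeff_derivative, PowerSeries.coeff_mk, map_neg,
    Nat.factorial_succ]
  push_cast
  field_simp
  ring

/-- The power series form of `Res E / U ^ (n + 2) = 0`. With `V = todSeries K`, one has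
`E = (h V)'`, whence `E * V ^ (-(n + 2)) = F - h F' / (n + 1)` for `F = V ^ (-(n + 1))`, and the
operator `1 - h (d/dh) / (n + 1)` kills the coefficient of `h ^ (n + 1)`. -/
lemma coeff_mul_pow_eq_zero [CharZero K] (n : ℕ) :
    PowerSeries.coeff (n + 1) (expNegSeries K * (todSeries K)⁻¹ ^ (n + 2)) = 0 := by
  set V := todSeries K with hV
  set W := V⁻¹ with hW
  have hVW : V * W = 1 := todSeries_mul_inv
  have hE : expNegSeries K = V + PowerSeries.X * PowerSeries.derivative K V := by
    have h := derivative_expNegSeries (K := K)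
    nth_rewrite 1 [expNegSeries_eq] at h
    rw [map_sub, Derivation.leibniz, PowerSeries.derivative_X] at h
    simp only [Derivation.map_one_eq_zero, smul_eq_mul, zero_sub, mul_one] at h
    linear_combination h
  have hd : V * PowerSeries.derivative K W + W * PowerSeries.derivative K V = 0 := by
    have h := congrArg (PowerSeries.derivative K) hVW
    rw [Derivation.leibniz] at h
    simpa using h
  have hF : PowerSeries.derivative K (W ^ (n + 1))
      = ((n : PowerSeries K) + 1) * W ^ n * PowerSeries.derivative K W := by
    rw [Derivation.leibniz_pow]
    simp [mul_assoc]
  have key : ((n : PowerSeries K) + 1) * (expNegSeries K * W ^ (n + 2))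
      = ((n : PowerSeries K) + 1) * W ^ (n + 1)
        - PowerSeries.X * PowerSeries.derivative K (W ^ (n + 1)) := by
    rw [hF, hE]
    linear_combination ((n : PowerSeries K) + 1) * W ^ (n + 1) * hVW
      + ((n : PowerSeries K) + 1) * PowerSeries.X * W ^ (n + 1) * hd
      - ((n : PowerSeries K) + 1) * PowerSeries.X * W ^ n * PowerSeries.derivative K W * hVW
  have hC : (n : PowerSeries K) + 1 = PowerSeries.C ((n : K) + 1) := by simp
  have h := congrArg (PowerSeries.coeff (n + 1)) key
  rw [hC, map_sub, PowerSeries.coeff_C_mul, PowerSeries.coeff_C_mul,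
    PowerSeries.coeff_succ_X_mul, PowerSeries.coeff_derivative] at h
  have h1 : (n : K) + 1 ≠ 0 := by exact_mod_cast n.succ_ne_zero
  have h2 : ((n : K) + 1) * PowerSeries.coeff (n + 1) (expNegSeries K * W ^ (n + 2)) = 0 := by
    rw [h]; ring
  exact (mul_eq_zero.mp h2).resolve_left h1

/-- The Laurent series `U = exp (-h) - 1`. -/
noncomputable def uSeries (K : Type*) [Field K] : LaurentSeries K :=
  HahnSeries.ofPowerSeries ℤ K (expNegSeries K) - 1

lemma uSeries_eq : uSeries K = HahnSeries.single 1 (-1 : K)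
    * HahnSeries.ofPowerSeries ℤ K (todSeries K) := by
  have h : HahnSeries.single (1 : ℤ) (-1 : K)
      = -HahnSeries.ofPowerSeries ℤ K PowerSeries.X := by
    rw [HahnSeries.ofPowerSeries_X, HahnSeries.single_neg]
  rw [uSeries, expNegSeries_eq, h, map_sub, map_mul, map_one]
  ring

lemma uSeries_inv : (uSeries K)⁻¹ = HahnSeries.single (-1) (-1 : K)
    * HahnSeries.ofPowerSeries ℤ K (todSeries K)⁻¹ := by
  apply inv_eq_of_mul_eq_one_right
  rw [uSeries_eq, mul_mul_mul_comm, ← map_mul, todSeries_mul_inv, HahnSeries.single_mul_single]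
  simp

lemma uSeries_ne_zero : uSeries K ≠ 0 := by
  intro h
  have h' := uSeries_inv (K := K)
  have h1 : HahnSeries.ofPowerSeries ℤ K (todSeries K)
      * HahnSeries.ofPowerSeries ℤ K (todSeries K)⁻¹ = 1 := by
    rw [← map_mul, todSeries_mul_inv, map_one]
  rw [h, inv_zero, eq_comm, mul_eq_zero] at h'
  rcases h' with h' | h'
  · simp at h'
  · simp [h'] at h1

lemma coeff_exp_mul_inv_pow (n : ℕ) :
    (HahnSeries.ofPowerSeries ℤ K (expNegSeries K) * (uSeries K ^ (n + 1))⁻¹).coeff (-1)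
      = (-1) ^ (n + 1) * PowerSeries.coeff n (expNegSeries K * (todSeries K)⁻¹ ^ (n + 1)) := by
  rw [← inv_pow, uSeries_inv, mul_pow, HahnSeries.single_pow, mul_left_comm, ← map_pow, ← map_mul]
  have h : (-1 : ℤ) = (n : ℤ) + (n + 1) • (-1 : ℤ) := by simp
  have h2 := HahnSeries.coeff_single_mul_add (r := (-1 : K) ^ (n + 1))
    (x := HahnSeries.ofPowerSeries ℤ K (expNegSeries K * (todSeries K)⁻¹ ^ (n + 1)))
    (a := (n : ℤ)) (b := (n + 1) • (-1 : ℤ))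
  rw [← h, HahnSeries.ofPowerSeries_apply_coeff] at h2
  exact h2

lemma residue_exp_div :
    (HahnSeries.ofPowerSeries ℤ K (expNegSeries K) * (uSeries K)⁻¹).coeff (-1) = -1 := by
  have h := coeff_exp_mul_inv_pow (K := K) 0
  simp only [zero_add, pow_one] at h
  rw [h]
  simp [constantCoeff_expNegSeries, constantCoeff_todSeries]

lemma residue_exp_div_pow [CharZero K] (n : ℕ) :
    (HahnSeries.ofPowerSeries ℤ K (expNegSeries K) * (uSeries K ^ (n + 2))⁻¹).coeff (-1) = 0 := by
  rw [coeff_exp_mul_inv_pow (n + 1), coeff_mul_pow_eq_zero, mul_zero]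

/-- `S - U` is a unit of `K[[h]]`, its constant coefficient being `S`. -/
lemma exists_inv_sub (s : K) (hs : s ≠ 0) : ∃ G : PowerSeries K,
    (HahnSeries.C s - uSeries K) * HahnSeries.ofPowerSeries ℤ K G = 1 := by
  refine ⟨(PowerSeries.C s - (expNegSeries K - 1))⁻¹, ?_⟩
  have h : HahnSeries.C s - uSeries K
      = HahnSeries.ofPowerSeries ℤ K (PowerSeries.C s - (expNegSeries K - 1)) := by
    simp [uSeries]
  rw [h, ← map_mul, PowerSeries.mul_inv_cancel, map_one]
  simpa [constantCoeff_expNegSeries] using hs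

lemma coeff_neg_one_ofPowerSeries (F : PowerSeries K) :
    (HahnSeries.ofPowerSeries ℤ K F).coeff (-1) = 0 := by
  rw [PowerSeries.coeff_coe]
  simp

/-- The case `k = 0`, by induction on `n` using `S = (S - U) + U`. -/
lemma residue_zero [CharZero K] (s : K) (hs : s ≠ 0) (n : ℕ) :
    (HahnSeries.ofPowerSeries ℤ K (expNegSeries K) * (uSeries K ^ (n + 1))⁻¹
      * (HahnSeries.C s - uSeries K)⁻¹).coeff (-1) = -(1 / s ^ (n + 1)) := by
  obtain ⟨G, hG⟩ := exists_inv_sub s hs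
  have hne : HahnSeries.C s - uSeries K ≠ 0 := left_ne_zero_of_mul_eq_one hG
  have hU := uSeries_ne_zero (K := K)
  have step (m : ℕ) :
      s * (HahnSeries.ofPowerSeries ℤ K (expNegSeries K) * (uSeries K ^ (m + 1))⁻¹
        * (HahnSeries.C s - uSeries K)⁻¹).coeff (-1)
      = (HahnSeries.ofPowerSeries ℤ K (expNegSeries K) * (uSeries K ^ (m + 1))⁻¹).coeff (-1)
        + (HahnSeries.ofPowerSeries ℤ K (expNegSeries K) * (uSeries K ^ m)⁻¹
        * (HahnSeries.C s - uSeries K)⁻¹).coeff (-1) := by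
    rw [← smul_eq_mul, ← HahnSeries.coeff_smul, ← HahnSeries.C_mul_eq_smul, ← HahnSeries.coeff_add]
    congr 1
    generalize (HahnSeries.C s : LaurentSeries K) = c at *
    field_simp
    ring
  induction n with
  | zero =>
    have h := step 0
    rw [pow_zero, inv_one, mul_one, ← eq_inv_of_mul_eq_one_right hG, ← map_mul,
      coeff_neg_one_ofPowerSeries, zero_add, pow_one, residue_exp_div] at h
    rw [zero_add, pow_one, pow_one, ← eq_inv_of_mul_eq_one_right hG]
    apply mul_left_cancel₀ hs
    rw [h]
    field_simp
    ring
  | succ n ih =>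
    have h := step (n + 1)
    rw [ih, residue_exp_div_pow] at h
    apply mul_left_cancel₀ hs
    rw [h]
    field_simp
    ring

/-- The residue formula over an arbitrary field of characteristic zero, with any nonzero
constant `s` in place of the variable `S`. -/
lemma residue_general [CharZero K] (s : K) (hs : s ≠ 0) (k : ℕ) : ∀ n : ℕ, k < n →
    (HahnSeries.ofPowerSeries ℤ K (expNegSeries K) ^ (k + 1) * (uSeries K ^ n)⁻¹
      * (HahnSeries.C s - uSeries K)⁻¹).coeff (-1) = -((1 + s) ^ k / s ^ n) := by
  induction k with
  | zero =>
    rintro (_ | n) hn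
    · omega
    · simpa using residue_zero s hs n
  | succ k ih =>
    rintro (_ | n) hn
    · omega
    have hU := uSeries_ne_zero (K := K)
    have hE : HahnSeries.ofPowerSeries ℤ K (expNegSeries K) = 1 + uSeries K := by
      simp [uSeries]
    have hsplit : HahnSeries.ofPowerSeries ℤ K (expNegSeries K) ^ (k + 1 + 1)
          * (uSeries K ^ (n + 1))⁻¹ * (HahnSeries.C s - uSeries K)⁻¹
        = HahnSeries.ofPowerSeries ℤ K (expNegSeries K) ^ (k + 1) * (uSeries K ^ (n + 1))⁻¹
            * (HahnSeries.C s - uSeries K)⁻¹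
          + HahnSeries.ofPowerSeries ℤ K (expNegSeries K) ^ (k + 1) * (uSeries K ^ n)⁻¹
            * (HahnSeries.C s - uSeries K)⁻¹ := by
      have h : (uSeries K ^ n)⁻¹ = uSeries K * (uSeries K ^ (n + 1))⁻¹ := by
        field_simp
        ring
      rw [h, pow_succ _ (k + 1)]
      nth_rewrite 2 [hE]
      ring
    rw [hsplit, HahnSeries.coeff_add, ih (n + 1) (by omega), ih n (by omega)]
    field_simp
    ring

end

/-- Lemma 7.2 of the paper: in `K((h))` with `K = ℚ(S)`, `E = exp(−h)`,
`U = E − 1`, for `0 ≤ k < n` the coefficient of `h^{−1}` in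
`(1+U)^{k+1} · U^{−n} · (S−U)^{−1}` equals `−(1+S)^k / S^n`. -/
theorem residue_cone_lemma (n k : ℕ) (hkn : k < n) :
    letI K := RatFunc ℚ
    letI E : LaurentSeries K :=
      HahnSeries.ofPowerSeries ℤ K
        (PowerSeries.mk fun m => ((-1 : K) ^ m / (Nat.factorial m : K)))
    letI U : LaurentSeries K := E - 1
    letI S : LaurentSeries K := HahnSeries.C (RatFunc.X : RatFunc ℚ)
    ((1 + U) ^ (k + 1) * (U ^ n)⁻¹ * (S - U)⁻¹).coeff (-1)
      = -((1 + RatFunc.X : RatFunc ℚ) ^ k / (RatFunc.X : RatFunc ℚ) ^ n) := by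
  have h := residue_general (RatFunc.X : RatFunc ℚ) RatFunc.X_ne_zero k n hkn
  simp only [add_sub_cancel]
  exact h
end

section
/- Let K be a field, let n ≥ 1 be a natural number, let y, T_1, T_2 ∈ K with T_1^n ≠ 1, T_2^n ≠ 1, and T_1 T_2 ≠ 1. Set δ = −1 − y, S_1 = T_1^n − 1, S_2 = T_2^n − 1, S_{12} = T_1 T_2 − 1. Then 1 + (1+y)·(T_1^n/(1 − T_1^n) + T_2^n/(1 − T_2^n)) + (1+y)^2·(∑_{i=1}^{n} (T_1 T_2)^i)/((1 − T_1^n)(1 − T_2^n)) = (S_1 S_2 S_{12} + δ·S_{12}·(S_1 + S_2 + 2 S_1 S_2) + δ^2·((1 + S_{12})^{n+1} − (1 + S_{12})))/(S_1 S_2 S_{12}); in particular the numerator on the right is a polynomial in δ, S_1, S_2, S_{12} with nonnegative coefficients. -/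
/-!
The rational identity follows by clearing denominators, once the finite geometric sum is
written as `(x - 1) * ∑_{i=1}^n x^i = x^(n+1) - x` with `x = T₁ T₂ = 1 + S₁₂`.
The same formula with `x = 1 + s₁₂` shows that the numerator equals
`s₁ s₂ s₁₂ + d s₁₂ (s₁ + s₂ + 2 s₁ s₂) + d² s₁₂ ∑_{i=1}^n (1 + s₁₂)^i`,
an expression without subtraction: it is the image of a polynomial over `ℕ`, so its
coefficients are nonnegative.
-/

theorem geom_Icc_mul {A : Type*} [CommRing A] (x : A) (n : ℕ) :
    (x - 1) * ∑ i ∈ Finset.Icc 1 n, x ^ i = x ^ (n + 1) - x := by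
  induction n with
  | zero => simp
  | succ k ih =>
    rw [Finset.sum_Icc_succ_top (by omega), mul_add, ih]
    ring

/-- Localized equivariant Hirzebruch class of the `A_{n−1}` singularity
`{x₁x₂ = x₃ⁿ} ⊂ ℂ³` by Euler–Maclaurin summation: in the variables
`T_i = e^{−t_i}`, `δ = −1−y`, `S₁ = T₁ⁿ−1`, `S₂ = T₂ⁿ−1`, `S₁₂ = T₁T₂−1`, the
orbit-by-orbit sum equals the displayed rational function, whose numerator is a
polynomial with nonnegative coefficients in `δ, S₁, S₂, S₁₂`. -/
theorem An_singularity_class {K : Type*} [Field K] (n : ℕ) (hn : 1 ≤ n)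
    (y T₁ T₂ : K) (h1 : T₁ ^ n ≠ 1) (h2 : T₂ ^ n ≠ 1) (h12 : T₁ * T₂ ≠ 1)
    (δ S₁ S₂ S₁₂ : K) (hδ : δ = -1 - y) (hS₁ : S₁ = T₁ ^ n - 1)
    (hS₂ : S₂ = T₂ ^ n - 1) (hS₁₂ : S₁₂ = T₁ * T₂ - 1) :
    (1 + (1 + y) * (T₁ ^ n / (1 - T₁ ^ n) + T₂ ^ n / (1 - T₂ ^ n))
        + (1 + y) ^ 2 * (∑ i ∈ Finset.Icc 1 n, (T₁ * T₂) ^ i)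
            / ((1 - T₁ ^ n) * (1 - T₂ ^ n))
      = (S₁ * S₂ * S₁₂ + δ * S₁₂ * (S₁ + S₂ + 2 * S₁ * S₂)
          + δ ^ 2 * ((1 + S₁₂) ^ (n + 1) - (1 + S₁₂)))
        / (S₁ * S₂ * S₁₂))
    ∧ (letI R := MvPolynomial (Fin 4) ℤ
       letI d : R := MvPolynomial.X 0
       letI s₁ : R := MvPolynomial.X 1
       letI s₂ : R := MvPolynomial.X 2
       letI s₁₂ : R := MvPolynomial.X 3
       ∀ m : Fin 4 →₀ ℕ,
         0 ≤ MvPolynomial.coeff m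
              (s₁ * s₂ * s₁₂ + d * s₁₂ * (s₁ + s₂ + 2 * s₁ * s₂)
                + d ^ 2 * ((1 + s₁₂) ^ (n + 1) - (1 + s₁₂)))) := by
  refine ⟨?_, ?_⟩
  · have hx : T₁ * T₂ = 1 + S₁₂ := by rw [hS₁₂]; ring
    have ha : T₁ ^ n = 1 + S₁ := by rw [hS₁]; ring
    have hb : T₂ ^ n = 1 + S₂ := by rw [hS₂]; ring
    have hy : y = -1 - δ := by rw [hδ]; ring
    have n1 : S₁ ≠ 0 := by rw [hS₁]; exact sub_ne_zero.mpr h1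
    have n2 : S₂ ≠ 0 := by rw [hS₂]; exact sub_ne_zero.mpr h2
    have n12 : S₁₂ ≠ 0 := by rw [hS₁₂]; exact sub_ne_zero.mpr h12
    have hsum := geom_Icc_mul (1 + S₁₂) n
    rw [add_sub_cancel_left] at hsum
    rw [← hsum, hx, ha, hb, hy]
    have e1 : 1 - (1 + S₁) = -S₁ := by ring
    have e2 : 1 - (1 + S₂) = -S₂ := by ring
    rw [e1, e2]
    generalize ∑ i ∈ Finset.Icc 1 n, (1 + S₁₂) ^ i = G
    field_simp
    ring
  · intro m
    have hsum := geom_Icc_mul (1 + MvPolynomial.X 3 : MvPolynomial (Fin 4) ℤ) n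
    rw [add_sub_cancel_left] at hsum
    -- The numerator, rewritten without subtraction, as a polynomial over `ℕ`.
    let q : MvPolynomial (Fin 4) ℕ :=
      .X 1 * .X 2 * .X 3 + .X 0 * .X 3 * (.X 1 + .X 2 + 2 * .X 1 * .X 2)
        + .X 0 ^ 2 * (.X 3 * ∑ i ∈ Finset.Icc 1 n, (1 + .X 3) ^ i)
    have hq : (MvPolynomial.X 1 * MvPolynomial.X 2 * MvPolynomial.X 3
        + MvPolynomial.X 0 * MvPolynomial.X 3 * (MvPolynomial.X 1 + MvPolynomial.X 2
          + 2 * MvPolynomial.X 1 * MvPolynomial.X 2)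
        + MvPolynomial.X 0 ^ 2 * ((1 + MvPolynomial.X 3) ^ (n + 1) - (1 + MvPolynomial.X 3))
          : MvPolynomial (Fin 4) ℤ) = MvPolynomial.map (Nat.castRingHom ℤ) q := by
      rw [← hsum]
      simp [q]
    change 0 ≤ MvPolynomial.coeff m (_ : MvPolynomial (Fin 4) ℤ)
    rw [hq, MvPolynomial.coeff_map]
    exact Int.natCast_nonneg _
end
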